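/- Let w_x, w_{x*} be words and W⁺, W⁻ finite word sets with w_x ∉ W⁺ and w_{x*} ∉ W⁻; set W := {w_x} ∪ W⁺ and W_* := {w_{x*}} ∪ W⁻. If every word involved has an embedding with respect to C (Cᵀ.mulVec w⃗_i = PMI_i), then w⃗_{x*} = w⃗_x + ∑_{i∈W⁺} w⃗_i − ∑_{i∈W⁻} w⃗_i + C†.mulVec( ρ^{W,W_*} + σ^W − σ^{W_*} − (τ^W − τ^{W_*})·𝟙 ). (Paper's Corollary 5: embedding-level word transformation.) -/

import Mathlib

open MeasureTheory Real Finset Matrix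

namespace AnalogiesExplained

variable {Ω : Type*}

/-- Conditional probability `p(B ∣ A) = μ(A ∩ B) / μ(A)` (as a real number). -/
noncomputable def condP [MeasurableSpace Ω] (μ : Measure Ω) (A B : Set Ω) : ℝ :=
  (μ (A ∩ B)).toReal / (μ A).toReal

/-- Pointwise mutual information `PMI(A, B) = log (μ(A ∩ B) / (μ(A)·μ(B)))`. -/
noncomputable def PMI [MeasurableSpace Ω] (μ : Measure Ω) (A B : Set Ω) : ℝ :=
  Real.log ((μ (A ∩ B)).toReal / ((μ A).toReal * (μ B).toReal))

/-- The joint event of a finite word set: `A_W = ⋂ i ∈ W, A i`. -/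
def jointEvent {ι : Type*} (A : ι → Set Ω) (W : Finset ι) : Set Ω :=
  ⋂ i ∈ W, A i

/-- Paraphrase error `ρ^{W,W*}_j = log (p(B_j ∣ A_{W*}) / p(B_j ∣ A_W))`. -/
noncomputable def rho [MeasurableSpace Ω] (μ : Measure Ω) (AW AWstar B : Set Ω) : ℝ :=
  Real.log (condP μ AWstar B / condP μ AW B)

/-- Conditional-dependence error `σ^W_j = log (p(A_W ∣ B_j) / ∏_{i ∈ W} p(A_i ∣ B_j))`. -/
noncomputable def sigma [MeasurableSpace Ω] {ι : Type*} (μ : Measure Ω) (A : ι → Set Ω)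
    (W : Finset ι) (B : Set Ω) : ℝ :=
  Real.log (condP μ B (jointEvent A W) / ∏ i ∈ W, condP μ B (A i))

/-- Marginal-dependence error `τ^W = log (μ(A_W) / ∏_{i ∈ W} μ(A_i))`. -/
noncomputable def tau [MeasurableSpace Ω] {ι : Type*} (μ : Measure Ω) (A : ι → Set Ω)
    (W : Finset ι) : ℝ :=
  Real.log ((μ (jointEvent A W)).toReal / ∏ i ∈ W, (μ (A i)).toReal)

theorem sum_PMI_eq [MeasurableSpace Ω] {ι : Type*} (μ : Measure Ω) (A : ι → Set Ω)
    (W : Finset ι) (B : Set Ω)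
    (hA : ∀ i ∈ W, 0 < (μ (A i)).toReal) (hB : 0 < (μ B).toReal)
    (hAW : 0 < (μ (jointEvent A W)).toReal)
    (hAB : ∀ i ∈ W, 0 < (μ (A i ∩ B)).toReal)
    (hAWB : 0 < (μ (jointEvent A W ∩ B)).toReal) :
    ∑ i ∈ W, PMI μ (A i) B = Real.log (condP μ (jointEvent A W) B) - Real.log (μ B).toReal
      - sigma μ A W B + tau μ A W := by
  have hc : ∀ i ∈ W, condP μ B (A i) ≠ 0 := fun i hi => by
    unfold condP
    rw [Set.inter_comm]
    exact (div_pos (hAB i hi) hB).ne'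
  have hcW : condP μ B (jointEvent A W) ≠ 0 := by
    unfold condP
    rw [Set.inter_comm]
    exact (div_pos hAWB hB).ne'
  have h1 : ∀ i ∈ W, PMI μ (A i) B = Real.log (condP μ B (A i)) - Real.log (μ (A i)).toReal := by
    intro i hi
    unfold PMI condP
    rw [Set.inter_comm B, Real.log_div (hAB i hi).ne' (mul_pos (hA i hi) hB).ne',
      Real.log_mul (hA i hi).ne' hB.ne', Real.log_div (hAB i hi).ne' hB.ne']
    ring
  rw [Finset.sum_congr rfl h1, Finset.sum_sub_distrib]
  unfold sigma tau
  rw [Real.log_div hcW (Finset.prod_ne_zero_iff.2 hc), Real.log_prod hc,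
    Real.log_div hAW.ne' (Finset.prod_ne_zero_iff.2 fun i hi => (hA i hi).ne'),
    Real.log_prod (fun i hi => (hA i hi).ne')]
  unfold condP
  rw [Set.inter_comm B (jointEvent A W), Real.log_div hAWB.ne' hB.ne',
    Real.log_div hAWB.ne' hAW.ne']
  ring

/-- **Corollary 5 (Word transformation at the embedding level).** With `W = {w_x} ∪ W⁺`,
`W_* = {w_{x*}} ∪ W⁻`, if every word involved has an embedding w.r.t. `C`, then
`w⃗_{x*} = w⃗_x + ∑_{i∈W⁺} w⃗_i − ∑_{i∈W⁻} w⃗_i + C†(ρ^{W,W_*} + σ^W − σ^{W_*} − (τ^W − τ^{W_*})·𝟙)`. -/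
theorem word_transformation_embedding
    [MeasurableSpace Ω] (μ : Measure Ω) [IsProbabilityMeasure μ]
    {ι : Type*} [DecidableEq ι] (A : ι → Set Ω) {n : ℕ} (B : Fin n → Set Ω)
    (x xstar : ι) (Wp Wm : Finset ι)
    (hx : x ∉ Wp) (hxs : xstar ∉ Wm)
    (hmA : ∀ i, MeasurableSet (A i)) (hmB : ∀ j, MeasurableSet (B j))
    (hA : ∀ i ∈ insert x Wp ∪ insert xstar Wm, 0 < (μ (A i)).toReal)
    (hB : ∀ j, 0 < (μ (B j)).toReal)
    (hAW : 0 < (μ (jointEvent A (insert x Wp))).toReal)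
    (hAWs : 0 < (μ (jointEvent A (insert xstar Wm))).toReal)
    (hAB : ∀ i ∈ insert x Wp ∪ insert xstar Wm, ∀ j, 0 < (μ (A i ∩ B j)).toReal)
    (hAWB : ∀ j, 0 < (μ (jointEvent A (insert x Wp) ∩ B j)).toReal)
    (hAWsB : ∀ j, 0 < (μ (jointEvent A (insert xstar Wm) ∩ B j)).toReal)
    {d : ℕ} (C : Matrix (Fin d) (Fin n) ℝ)
    (hC : IsUnit (C * C.transpose))
    (wv : ι → Fin d → ℝ)
    (hwi : ∀ i ∈ insert x Wp ∪ insert xstar Wm,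
      C.transpose.mulVec (wv i) = fun j => PMI μ (A i) (B j)) :
    wv xstar = wv x + (∑ i ∈ Wp, wv i) - (∑ i ∈ Wm, wv i)
      + ((C * C.transpose)⁻¹ * C).mulVec
          (fun j => rho μ (jointEvent A (insert x Wp)) (jointEvent A (insert xstar Wm)) (B j)
            + sigma μ A (insert x Wp) (B j) - sigma μ A (insert xstar Wm) (B j)
            - (tau μ A (insert x Wp) - tau μ A (insert xstar Wm))) := by
  have key : (fun j => rho μ (jointEvent A (insert x Wp)) (jointEvent A (insert xstar Wm)) (B j)
            + sigma μ A (insert x Wp) (B j) - sigma μ A (insert xstar Wm) (B j)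
            - (tau μ A (insert x Wp) - tau μ A (insert xstar Wm)))
      = C.transpose.mulVec (∑ i ∈ insert xstar Wm, wv i - ∑ i ∈ insert x Wp, wv i) := by
    have e1 : C.transpose.mulVec (∑ i ∈ insert xstar Wm, wv i)
        = ∑ i ∈ insert xstar Wm, fun j => PMI μ (A i) (B j) := by
      rw [Matrix.mulVec_sum]
      exact Finset.sum_congr rfl fun i hi => hwi i (Finset.mem_union_right _ hi)
    have e2 : C.transpose.mulVec (∑ i ∈ insert x Wp, wv i)
        = ∑ i ∈ insert x Wp, fun j => PMI μ (A i) (B j) := by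
      rw [Matrix.mulVec_sum]
      exact Finset.sum_congr rfl fun i hi => hwi i (Finset.mem_union_left _ hi)
    rw [Matrix.mulVec_sub, e1, e2]
    funext j
    rw [Pi.sub_apply, Finset.sum_apply, Finset.sum_apply,
      sum_PMI_eq μ A _ (B j) (fun i hi => hA i (Finset.mem_union_right _ hi)) (hB j) hAWs
        (fun i hi => hAB i (Finset.mem_union_right _ hi) j) (hAWsB j),
      sum_PMI_eq μ A _ (B j) (fun i hi => hA i (Finset.mem_union_left _ hi)) (hB j) hAW
        (fun i hi => hAB i (Finset.mem_union_left _ hi) j) (hAWB j)]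
    unfold rho condP
    rw [Real.log_div (div_pos (hAWsB j) hAWs).ne' (div_pos (hAWB j) hAW).ne']
    ring
  rw [key, Matrix.mulVec_mulVec, Matrix.mul_assoc,
    Matrix.nonsing_inv_mul _ ((Matrix.isUnit_iff_isUnit_det _).1 hC), Matrix.one_mulVec,
    Finset.sum_insert hx, Finset.sum_insert hxs]
  abel

end AnalogiesExplained
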